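/- (Proposition 3.1, main variance result for the MIMCMC simplified estimator.) Let d ≥ 1, S = {0,1}^d, and for each s ∈ S let X_s be a measurable space; set Z = ∏_{s ∈ S} X_s. Let Q be a probability measure on Z. For each s ∈ S let g_s : X_s → ℝ be measurable with 0 < C̲ ≤ g_s ≤ C̄; define G(z) = max_{s ∈ S} g_s(z_s), Z_G = ∫ G dQ, the tilted probability measure Π(dz) = (G(z)/Z_G) Q(dz), and H_s(z) = g_s(z_s)/G(z). For each s ∈ S let φ_s : X_s → ℝ be measurable with |φ_s| ≤ M, and define the normalized signed multi-increment ψ(z) = ∑_{s ∈ S} (−1)^{s_1+⋯+s_d} φ_s(z_s) H_s(z) / E_Π[H_s] and the target T = E_Π[ψ] = ∑_{s ∈ S} (−1)^{s_1+⋯+s_d} E_Π[φ_s(z_s) H_s(z)] / E_Π[H_s(z)]. Assume: (A2′) there are constants C₁, C₂ ≥ 0 such that |E_Q[f·ψ]| ≤ C₁ for every measurable f : Z → ℝ with |f| ≤ 1, and Var_Q[ψ] ≤ C₂²; (A3) K is a Markov kernel on Z which is Π-reversible and satisfies K(z, A) ≥ ξ ν(A) for all z and measurable A, for some ξ ∈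 (0,1) and probability measure ν. Let (Z_j)_{j≥1} be the stationary Markov chain with initial law Π and transition kernel K. Then there exists a constant C < ∞, depending only on d, C̲, C̄, M and ξ (and not on C₁, C₂, N), such that for every N ≥ 1, E[((1/N) ∑_{j=1}^N ψ(Z_j) − T)²] ≤ C · max{C₁², C₂², C₁C₂} / N. -/

import Mathlib

open MeasureTheory ProbabilityTheory
open scoped ENNReal

universe u

/-- The law of the first `n+1` steps `(Z_0, …, Z_n)` of the Markov chain with initial
distribution `Π` and transition kernel `K` (the finite-dimensional marginals of the
Ionescu–Tulcea path measure). -/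
noncomputable def chainFinLaw {Z : Type u} [MeasurableSpace Z] (PiM : Measure Z)
    (K : Kernel Z Z) : (n : ℕ) → Measure (Fin (n + 1) → Z)
  | 0 => PiM.map fun z => fun _ => z
  | n + 1 =>
    ((chainFinLaw PiM K n).compProd
        (K.comap (fun v => v (Fin.last n)) (measurable_pi_apply _))).map
      fun q => Fin.snoc q.1 q.2

/-!
By Doeblin's minorization `ξ ν ≤ K z`, the kernel contracts the mean-zero part of `L²(Π)` by the
factor `r = √(1 - ξ)`. Hence the covariances of `ψ(Z_i)` and `ψ(Z_j)` decay like `r ^ |i - j|`, and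
summing the geometric series gives `Var[∑ ψ(Z_j)] ≤ N (1 + r) / (1 - r) Var_Π[ψ]`. The weight `G`
takes values in `[C̲, C̄]`, so `Π ≤ (C̄ / C̲) Q`. Since the variance is the smallest mean squared
deviation from a constant, comparing with the `Q`-mean of `ψ` gives
`Var_Π[ψ] ≤ (C̄ / C̲) Var_Q[ψ] ≤ (C̄ / C̲) C₂²`.
-/

section Variance

variable {Ω : Type*} [MeasurableSpace Ω] {μ ν : Measure Ω} {X Y : Ω → ℝ}

lemma abs_covariance_le_sqrt_variance_mul_sqrt_variance [IsFiniteMeasure μ]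
    (hX : MemLp X 2 μ) (hY : MemLp Y 2 μ) :
    |cov[X, Y; μ]| ≤ √Var[X; μ] * √Var[Y; μ] := by
  have variance_pencil_nonneg (t : ℝ) :
      0 ≤ Var[X; μ] * (t * t) + 2 * cov[X, Y; μ] * t + Var[Y; μ] := by
    calc 0 ≤ Var[t • X + Y; μ] := variance_nonneg _ _
      _ = Var[X; μ] * (t * t) + 2 * cov[X, Y; μ] * t + Var[Y; μ] := by
        rw [variance_add (hX.const_smul t) hY, variance_smul, covariance_smul_left]
        ring
  have discrim_nonpos := discrim_le_zero variance_pencil_nonneg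
  rw [discrim] at discrim_nonpos
  rw [← Real.sqrt_mul (variance_nonneg _ _)]
  exact Real.abs_le_sqrt (by linarith)

lemma variance_le_integral_sub_sq [IsProbabilityMeasure μ] (hX : AEStronglyMeasurable X μ)
    (c : ℝ) : Var[X; μ] ≤ ∫ ω, (X ω - c) ^ 2 ∂μ := by
  rw [← variance_sub_const hX c]
  exact variance_le_expectation_sq (hX.sub aestronglyMeasurable_const)

lemma integral_sub_const_sq [IsProbabilityMeasure μ] (hX : MemLp X 2 μ) (c : ℝ) :
    ∫ ω, (X ω - c) ^ 2 ∂μ = ∫ ω, X ω ^ 2 ∂μ - 2 * c * ∫ ω, X ω ∂μ + c ^ 2 := by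
  have hshift := variance_sub_const hX.1 c
  rw [variance_eq_sub (X := fun ω => X ω - c) (hX.sub (memLp_const c)), variance_eq_sub hX,
    integral_sub (hX.integrable one_le_two) (integrable_const c)] at hshift
  simp only [Pi.pow_apply, integral_const, probReal_univ, one_smul] at hshift
  linarith

lemma variance_le_mul_variance_of_le_smul [IsProbabilityMeasure μ] [IsFiniteMeasure ν] {c : ℝ}
    (hc : 0 ≤ c) (hle : μ ≤ ENNReal.ofReal c • ν) (hX : MemLp X 2 ν) :
    Var[X; μ] ≤ c * Var[X; ν] := by
  have hXμ : MemLp X 2 μ := hX.of_measure_le_smul ENNReal.ofReal_ne_top hle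
  have hsq : Integrable (fun ω => (X ω - ∫ ω, X ω ∂ν) ^ 2) (ENNReal.ofReal c • ν) :=
    (hX.sub (memLp_const _)).integrable_sq.smul_measure ENNReal.ofReal_ne_top
  calc Var[X; μ]
      ≤ ∫ ω, (X ω - ∫ ω, X ω ∂ν) ^ 2 ∂μ := variance_le_integral_sub_sq hXμ.1 _
    _ ≤ ∫ ω, (X ω - ∫ ω, X ω ∂ν) ^ 2 ∂(ENNReal.ofReal c • ν) :=
        integral_mono_measure hle (.of_forall fun ω => sq_nonneg _) hsq
    _ = c * Var[X; ν] := by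
        rw [integral_smul_measure, ENNReal.toReal_ofReal hc, smul_eq_mul,
          variance_eq_integral hX.1.aemeasurable]

-- The quadratic `t ↦ ∫ (X - t)² dμ - ξ ∫ (X - t)² dν` is nonnegative, so its discriminant is not
-- positive.
lemma sq_integral_sub_mul_integral_le_of_smul_le [IsProbabilityMeasure μ]
    [IsProbabilityMeasure ν] {ξ : ℝ} (hξ : 0 < ξ) (hle : ENNReal.ofReal ξ • ν ≤ μ)
    (hX : MemLp X 2 μ) :
    (∫ ω, X ω ∂μ - ξ * ∫ ω, X ω ∂ν) ^ 2 ≤ (1 - ξ) * ∫ ω, X ω ^ 2 ∂μ := by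
  have hXν : MemLp X 2 ν := by
    refine hX.of_measure_le_smul (c := (ENNReal.ofReal ξ)⁻¹) (by simpa using hξ) ?_
    calc ν = (ENNReal.ofReal ξ)⁻¹ • ENNReal.ofReal ξ • ν := by
          rw [smul_smul, ENNReal.inv_mul_cancel (by simpa using hξ) ENNReal.ofReal_ne_top, one_smul]
      _ ≤ (ENNReal.ofReal ξ)⁻¹ • μ := by gcongr
  have hmul_le (t : ℝ) : ξ * ∫ ω, (X ω - t) ^ 2 ∂ν ≤ ∫ ω, (X ω - t) ^ 2 ∂μ := by
    have := integral_mono_measure hle (.of_forall fun ω => sq_nonneg (X ω - t))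
      (hX.sub (memLp_const t)).integrable_sq
    rwa [integral_smul_measure, ENNReal.toReal_ofReal hξ.le, smul_eq_mul] at this
  have quadratic_nonneg (t : ℝ) :
      0 ≤ (1 - ξ) * (t * t) + -2 * (∫ ω, X ω ∂μ - ξ * ∫ ω, X ω ∂ν) * t
        + (∫ ω, X ω ^ 2 ∂μ - ξ * ∫ ω, X ω ^ 2 ∂ν) := by
    have := hmul_le t
    rw [integral_sub_const_sq hX, integral_sub_const_sq hXν] at this
    linarith
  have hξ_le : ξ ≤ 1 := by
    simpa using hle Set.univ
  have discrim_nonpos := discrim_le_zero quadratic_nonneg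
  rw [discrim] at discrim_nonpos
  have : 0 ≤ (1 - ξ) * (ξ * ∫ ω, X ω ^ 2 ∂ν) :=
    mul_nonneg (by linarith) (mul_nonneg hξ.le (integral_nonneg fun ω => sq_nonneg _))
  linarith

end Variance

section Kernel

variable {α β : Type*} [MeasurableSpace α] [MeasurableSpace β] {μ : Measure α} {κ : Kernel α β}
  {E : Type*} [NormedAddCommGroup E] [NormedSpace ℝ E] {f : β → ℝ}

lemma comap_comp_eq_comp_map {γ : Type*} [MeasurableSpace γ] {μ : Measure γ} {φ : γ → α}
    (hφ : Measurable φ) : κ.comap φ hφ ∘ₘ μ = κ ∘ₘ μ.map φ := by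
  rw [← Kernel.comp_deterministic_eq_comap, ← Measure.comp_assoc,
    Measure.deterministic_comp_eq_map]

lemma integral_integral_kernel {f : β → E} (hf : Integrable f (κ ∘ₘ μ)) :
    ∫ x, ∫ y, f y ∂κ x ∂μ = ∫ y, f y ∂(κ ∘ₘ μ) := by
  rw [Measure.comp_eq_comp_const_apply] at hf ⊢
  rw [Kernel.integral_comp hf, Kernel.const_apply]

lemma integrable_integral_kernel {f : β → E} (hf : Integrable f (κ ∘ₘ μ)) :
    Integrable (fun x => ∫ y, f y ∂κ x) μ := by
  rw [Measure.comp_eq_comp_const_apply] at hf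
  simpa using hf.integral_comp

lemma ae_memLp_two_of_memLp_two_comp [IsFiniteMeasure μ] [IsMarkovKernel κ]
    (hf : MemLp f 2 (κ ∘ₘ μ)) : ∀ᵐ x ∂μ, MemLp f 2 (κ x) := by
  filter_upwards [Measure.ae_integrable_of_integrable_comp (hf.integrable one_le_two),
    Measure.ae_integrable_of_integrable_comp hf.integrable_sq] with x hx hx_sq
  exact (memLp_two_iff_integrable_sq hx.1).2 hx_sq

lemma memLp_two_integral_kernel [IsFiniteMeasure μ] [IsMarkovKernel κ]
    (hf : MemLp f 2 (κ ∘ₘ μ)) : MemLp (fun x => ∫ y, f y ∂κ x) 2 μ := by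
  have hf_int := integrable_integral_kernel (hf.integrable one_le_two)
  refine (memLp_two_iff_integrable_sq hf_int.1).2 ?_
  refine (integrable_integral_kernel hf.integrable_sq).mono' (hf_int.1.pow 2) ?_
  filter_upwards [ae_memLp_two_of_memLp_two_comp hf] with x hx
  have : (∫ y, f y ∂κ x) ^ 2 ≤ ∫ y, f y ^ 2 ∂κ x := by
    have := variance_nonneg f (κ x)
    rw [variance_eq_sub hx] at this
    simpa using this
  simpa using this

lemma memLp_integral_kernel_of_invariant {π : Measure β} [IsFiniteMeasure π] {K : Kernel β β}
    [IsMarkovKernel K] (hinv : K.Invariant π) (hf : MemLp f 2 π) :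
    MemLp (fun x => ∫ y, f y ∂K x) 2 π :=
  memLp_two_integral_kernel (hinv.def.symm ▸ hf)

lemma covariance_compProd [IsProbabilityMeasure μ] [IsMarkovKernel κ] {F : α → ℝ}
    (hF : MemLp F 2 μ) (hf : MemLp f 2 (κ ∘ₘ μ)) :
    cov[fun p => F p.1, fun p => f p.2; μ ⊗ₘ κ] = cov[F, fun x => ∫ y, f y ∂κ x; μ] := by
  have hfst : MeasurePreserving Prod.fst (μ ⊗ₘ κ) μ := ⟨measurable_fst, Measure.fst_compProd μ κ⟩
  have hsnd : MeasurePreserving Prod.snd (μ ⊗ₘ κ) (κ ∘ₘ μ) :=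
    ⟨measurable_snd, Measure.snd_compProd μ κ⟩
  have hF' := hF.comp_measurePreserving hfst
  have hf' := hf.comp_measurePreserving hsnd
  change cov[F ∘ Prod.fst, f ∘ Prod.snd; μ ⊗ₘ κ] = _
  rw [covariance_eq_sub hF' hf', covariance_eq_sub hF (memLp_two_integral_kernel hf),
    Measure.integral_compProd (hF'.integrable_mul hf'),
    Measure.integral_compProd (hF'.integrable one_le_two),
    Measure.integral_compProd (hf'.integrable one_le_two)]
  simp [integral_const_mul]

end Kernel

section Contraction

variable {Z : Type*} [MeasurableSpace Z] {K : Kernel Z Z} {π ν : Measure Z} {r ξ : ℝ}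

/-- The kernel `K` contracts the mean-zero part of `L²(π)` by the factor `r`. The `L²`-norm of the
centred function `f - ∫ f ∂π` is written as the standard deviation `√Var[f; π]`. -/
def IsL2Contraction (K : Kernel Z Z) (π : Measure Z) (r : ℝ) : Prop :=
  ∀ ⦃f : Z → ℝ⦄, MemLp f 2 π → √Var[fun x => ∫ y, f y ∂K x; π] ≤ r * √Var[f; π]

lemma isL2Contraction_of_minorization [IsProbabilityMeasure π] [IsProbabilityMeasure ν]
    [IsMarkovKernel K] (hinv : K.Invariant π) (hξ : 0 < ξ)
    (hmin : ∀ z, ENNReal.ofReal ξ • ν ≤ K z) : IsL2Contraction K π √(1 - ξ) := by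
  intro f hf
  have hξ_le : ξ ≤ 1 := by
    obtain ⟨z⟩ := π.nonempty_of_neZero
    simpa using hmin z Set.univ
  have hf_comp : MemLp f 2 (K ∘ₘ π) := by rwa [hinv.def]
  set m := ∫ x, f x ∂π
  have hfm_comp : Integrable (fun y => (f y - m) ^ 2) (K ∘ₘ π) :=
    (hf_comp.sub (memLp_const m)).integrable_sq
  have doeblin : ∀ᵐ x ∂π, (∫ y, f y ∂K x - (m + ξ * ∫ y, (f y - m) ∂ν)) ^ 2 ≤
      (1 - ξ) * ∫ y, (f y - m) ^ 2 ∂K x := by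
    filter_upwards [ae_memLp_two_of_memLp_two_comp hf_comp] with x hx
    have := sq_integral_sub_mul_integral_le_of_smul_le hξ (hmin x) (hx.sub (memLp_const m))
    simpa [integral_sub (hx.integrable one_le_two) (integrable_const m), sub_sub] using this
  rw [← Real.sqrt_mul (by linarith)]
  refine Real.sqrt_le_sqrt ?_
  calc Var[fun x => ∫ y, f y ∂K x; π]
      ≤ ∫ x, (∫ y, f y ∂K x - (m + ξ * ∫ y, (f y - m) ∂ν)) ^ 2 ∂π :=
        variance_le_integral_sub_sq (memLp_integral_kernel_of_invariant hinv hf).1 _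
    _ ≤ ∫ x, (1 - ξ) * ∫ y, (f y - m) ^ 2 ∂K x ∂π :=
        integral_mono_of_nonneg (.of_forall fun x => sq_nonneg _)
          ((integrable_integral_kernel hfm_comp).const_mul _) doeblin
    _ = (1 - ξ) * Var[f; π] := by
        rw [integral_const_mul, integral_integral_kernel hfm_comp, hinv.def,
          variance_eq_integral hf.1.aemeasurable]

end Contraction

section Chain

variable {Z : Type u} [MeasurableSpace Z] {π : Measure Z} {K : Kernel Z Z} {n : ℕ} {f h : Z → ℝ}
  {r : ℝ}

lemma measurable_fin_snoc :
    Measurable fun q : (Fin n → Z) × Z => (Fin.snoc q.1 q.2 : Fin (n + 1) → Z) := by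
  refine measurable_pi_iff.2 fun i => ?_
  induction i using Fin.lastCases with
  | last => simp only [Fin.snoc_last]; fun_prop
  | cast i => simp only [Fin.snoc_castSucc]; fun_prop

instance isProbabilityMeasure_chainFinLaw [IsProbabilityMeasure π] [IsMarkovKernel K] :
    IsProbabilityMeasure (chainFinLaw π K n) := by
  induction n with
  | zero => exact Measure.isProbabilityMeasure_map (by fun_prop)
  | succ n ih => exact Measure.isProbabilityMeasure_map measurable_fin_snoc.aemeasurable

lemma measurePreserving_init_last_chainFinLaw :
    MeasurePreserving (fun v => (Fin.init v, v (Fin.last (n + 1)))) (chainFinLaw π K (n + 1))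
      (chainFinLaw π K n ⊗ₘ K.comap (fun v => v (Fin.last n)) (measurable_pi_apply _)) := by
  have hmeas : Measurable fun v : Fin (n + 2) → Z => (Fin.init v, v (Fin.last (n + 1))) := by
    unfold Fin.init
    fun_prop
  refine ⟨hmeas, ?_⟩
  rw [chainFinLaw, Measure.map_map hmeas measurable_fin_snoc]
  convert Measure.map_id using 2
  ext q <;> simp

variable [IsProbabilityMeasure π] [IsMarkovKernel K]

lemma measurePreserving_init_chainFinLaw :
    MeasurePreserving Fin.init (chainFinLaw π K (n + 1)) (chainFinLaw π K n) :=
  .comp ⟨measurable_fst, Measure.fst_compProd _ _⟩ measurePreserving_init_last_chainFinLaw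

lemma measurePreserving_last_chainFinLaw (hinv : K.Invariant π) :
    MeasurePreserving (fun v => v (Fin.last n)) (chainFinLaw π K n) π := by
  induction n with
  | zero =>
    refine ⟨measurable_pi_apply _, ?_⟩
    rw [chainFinLaw, Measure.map_map (measurable_pi_apply _) (by fun_prop)]
    exact Measure.map_id
  | succ n ih =>
    refine .comp ⟨measurable_snd, ?_⟩ measurePreserving_init_last_chainFinLaw
    rw [← Measure.snd, Measure.snd_compProd, comap_comp_eq_comp_map, ih.map_eq, hinv.def]

lemma measurePreserving_eval_chainFinLaw (hinv : K.Invariant π) (i : Fin (n + 1)) :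
    MeasurePreserving (fun v => v i) (chainFinLaw π K n) π := by
  induction n with
  | zero => exact Fin.eq_zero i ▸ measurePreserving_last_chainFinLaw hinv
  | succ n ih =>
    induction i using Fin.lastCases with
    | last => exact measurePreserving_last_chainFinLaw hinv
    | cast i => exact (ih i).comp measurePreserving_init_chainFinLaw

lemma memLp_eval_chainFinLaw (hinv : K.Invariant π) (hf : MemLp f 2 π) (i : Fin (n + 1)) :
    MemLp (fun v => f (v i)) 2 (chainFinLaw π K n) :=
  hf.comp_measurePreserving (measurePreserving_eval_chainFinLaw hinv i)

lemma memLp_sum_chainFinLaw (hinv : K.Invariant π) (hf : MemLp f 2 π) :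
    MemLp (fun v => ∑ i, f (v i)) 2 (chainFinLaw π K n) :=
  memLp_finsetSum _ fun i _ => memLp_eval_chainFinLaw hinv hf i

lemma covariance_init_last_chainFinLaw (hinv : K.Invariant π) {F : (Fin (n + 1) → Z) → ℝ}
    (hF : MemLp F 2 (chainFinLaw π K n)) (hf : MemLp f 2 π) :
    cov[fun v => F (Fin.init v), fun v => f (v (Fin.last (n + 1))); chainFinLaw π K (n + 1)] =
      cov[F, fun v => ∫ y, f y ∂K (v (Fin.last n)); chainFinLaw π K n] := by
  have hsplit := measurePreserving_init_last_chainFinLaw (π := π) (K := K) (n := n)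
  rw [← hinv.def, ← (measurePreserving_last_chainFinLaw hinv (n := n)).map_eq,
    ← comap_comp_eq_comp_map (measurable_pi_apply _)] at hf
  have hfst := hF.comp_measurePreserving
    ⟨measurable_fst, Measure.fst_compProd _ (K.comap _ (measurable_pi_apply (Fin.last n)))⟩
  have hsnd := hf.comp_measurePreserving ⟨measurable_snd, Measure.snd_compProd _ _⟩
  calc _ = cov[fun p => F p.1, fun p => f p.2; chainFinLaw π K n ⊗ₘ
        K.comap (fun v => v (Fin.last n)) (measurable_pi_apply _)] :=
        hsplit.hasLaw.covariance_fun_comp hfst.1.aemeasurable hsnd.1.aemeasurable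
    _ = _ := covariance_compProd hF hf

lemma covariance_last_chainFinLaw (hinv : K.Invariant π) (hh : MemLp h 2 π) (hf : MemLp f 2 π) :
    cov[fun v => h (v (Fin.last n)), fun v => f (v (Fin.last n)); chainFinLaw π K n] =
      cov[h, f; π] :=
  (measurePreserving_last_chainFinLaw hinv).hasLaw.covariance_fun_comp hh.1.aemeasurable
    hf.1.aemeasurable

lemma covariance_sum_last_succ_chainFinLaw (hinv : K.Invariant π) (hh : MemLp h 2 π)
    (hf : MemLp f 2 π) :
    cov[fun v => ∑ i, h (v i), fun v => f (v (Fin.last (n + 1))); chainFinLaw π K (n + 1)] =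
      cov[fun v => ∑ i, h (v i), fun v => ∫ y, f y ∂K (v (Fin.last n)); chainFinLaw π K n] +
        cov[h, f; π] := by
  simp only [Fin.sum_univ_castSucc (n := n + 1)]
  rw [← covariance_init_last_chainFinLaw hinv (memLp_sum_chainFinLaw hinv hh) hf,
    ← covariance_last_chainFinLaw hinv hh hf (n := n + 1)]
  exact covariance_add_left
    ((memLp_sum_chainFinLaw hinv hh).comp_measurePreserving measurePreserving_init_chainFinLaw)
    (memLp_eval_chainFinLaw hinv hh _) (memLp_eval_chainFinLaw hinv hf _)

lemma abs_covariance_sum_last_chainFinLaw_le (hr0 : 0 ≤ r) (hr1 : r < 1)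
    (hK : IsL2Contraction K π r) (hinv : K.Invariant π) (hh : MemLp h 2 π) (hf : MemLp f 2 π) :
    |cov[fun v => ∑ i, h (v i), fun v => f (v (Fin.last n)); chainFinLaw π K n]| ≤
      (1 - r)⁻¹ * (√Var[h; π] * √Var[f; π]) := by
  induction n generalizing f with
  | zero =>
    simp only [Fin.sum_univ_castSucc, Finset.univ_eq_empty, Finset.sum_empty, zero_add]
    rw [covariance_last_chainFinLaw hinv hh hf]
    exact (abs_covariance_le_sqrt_variance_mul_sqrt_variance hh hf).trans
      (le_mul_of_one_le_left (by positivity) (one_le_inv₀ (by linarith) |>.2 (by linarith)))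
  | succ n ih =>
    rw [covariance_sum_last_succ_chainFinLaw hinv hh hf]
    calc _ ≤ (1 - r)⁻¹ * (√Var[h; π] * √Var[fun x => ∫ y, f y ∂K x; π]) +
          √Var[h; π] * √Var[f; π] :=
          (abs_add_le _ _).trans (add_le_add (ih (memLp_integral_kernel_of_invariant hinv hf))
            (abs_covariance_le_sqrt_variance_mul_sqrt_variance hh hf))
      _ ≤ (1 - r)⁻¹ * (√Var[h; π] * (r * √Var[f; π])) + √Var[h; π] * √Var[f; π] := by
          have : 0 < 1 - r := by linarith
          gcongr
          exact hK hf
      _ = (1 - r)⁻¹ * (√Var[h; π] * √Var[f; π]) := by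
          have : 1 - r ≠ 0 := by linarith
          field_simp
          ring

lemma variance_sum_succ_chainFinLaw (hinv : K.Invariant π) (hf : MemLp f 2 π) :
    Var[fun v => ∑ i, f (v i); chainFinLaw π K (n + 1)] =
      Var[fun v => ∑ i, f (v i); chainFinLaw π K n] +
        2 * cov[fun v => ∑ i, f (v i), fun v => ∫ y, f y ∂K (v (Fin.last n)); chainFinLaw π K n] +
        Var[f; π] := by
  have hinit := memLp_sum_chainFinLaw hinv hf (n := n)
  have hlast := measurePreserving_last_chainFinLaw hinv (n := n + 1)
  simp only [Fin.sum_univ_castSucc (n := n + 1)]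
  rw [← covariance_init_last_chainFinLaw hinv hinit hf,
    ← measurePreserving_init_chainFinLaw.variance_fun_comp hinit.1.aemeasurable,
    ← hlast.variance_fun_comp hf.1.aemeasurable]
  exact variance_fun_add (hinit.comp_measurePreserving measurePreserving_init_chainFinLaw)
    (memLp_eval_chainFinLaw hinv hf _)

lemma variance_sum_chainFinLaw_le (hr0 : 0 ≤ r) (hr1 : r < 1) (hK : IsL2Contraction K π r)
    (hinv : K.Invariant π) (hf : MemLp f 2 π) :
    Var[fun v => ∑ i, f (v i); chainFinLaw π K n] ≤ (n + 1) * ((1 + r) / (1 - r) * Var[f; π]) := by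
  have hr : 0 < 1 - r := by linarith
  have hVar := variance_nonneg f π
  induction n with
  | zero =>
    simp only [Fin.sum_univ_castSucc, Finset.univ_eq_empty, Finset.sum_empty, zero_add]
    rw [(measurePreserving_last_chainFinLaw hinv).variance_fun_comp hf.1.aemeasurable,
      Nat.cast_zero, zero_add, one_mul]
    exact le_mul_of_one_le_left hVar ((one_le_div hr).2 (by linarith))
  | succ n ih =>
    have hcov :
        cov[fun v => ∑ i, f (v i), fun v => ∫ y, f y ∂K (v (Fin.last n)); chainFinLaw π K n] ≤
          (1 - r)⁻¹ * (r * Var[f; π]) :=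
      calc _ ≤ (1 - r)⁻¹ * (√Var[f; π] * √Var[fun x => ∫ y, f y ∂K x; π]) :=
            (le_abs_self _).trans (abs_covariance_sum_last_chainFinLaw_le hr0 hr1 hK hinv hf
              (memLp_integral_kernel_of_invariant hinv hf))
        _ ≤ (1 - r)⁻¹ * (√Var[f; π] * (r * √Var[f; π])) := by
            gcongr
            exact hK hf
        _ = (1 - r)⁻¹ * (r * Var[f; π]) := by
            rw [mul_left_comm √_, Real.mul_self_sqrt hVar]
    have hconst :
        (1 + r) / (1 - r) * Var[f; π] = 2 * ((1 - r)⁻¹ * (r * Var[f; π])) + Var[f; π] := by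
      field_simp
      ring
    rw [variance_sum_succ_chainFinLaw hinv hf]
    push_cast
    linarith

lemma integral_sq_average_sub_integral_le (hr0 : 0 ≤ r) (hr1 : r < 1) (hK : IsL2Contraction K π r)
    (hinv : K.Invariant π) (hf : MemLp f 2 π) {P : Measure (ℕ → Z)}
    (hP : ∀ n : ℕ, P.map (fun ω => fun i : Fin (n + 1) => ω (i : ℕ)) = chainFinLaw π K n)
    {N : ℕ} (hN : 1 ≤ N) :
    ∫ ω, ((1 / (N : ℝ)) * (∑ j ∈ Finset.range N, f (ω j)) - ∫ z, f z ∂π) ^ 2 ∂P ≤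
      (1 + r) / (1 - r) * Var[f; π] / N := by
  obtain ⟨n, rfl⟩ : ∃ n, N = n + 1 := ⟨N - 1, by lia⟩
  set S : (Fin (n + 1) → Z) → ℝ := fun v => (1 / ((n + 1 : ℕ) : ℝ)) * ∑ i, f (v i)
  have hS : MemLp S 2 (chainFinLaw π K n) := (memLp_sum_chainFinLaw hinv hf).const_mul _
  have hmean : ∫ v, S v ∂chainFinLaw π K n = ∫ z, f z ∂π := by
    have heval (i : Fin (n + 1)) : ∫ v, f (v i) ∂chainFinLaw π K n = ∫ z, f z ∂π :=
      (measurePreserving_eval_chainFinLaw hinv i).hasLaw.integral_comp hf.1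
    rw [integral_const_mul, integral_finsetSum _
      fun i _ => (memLp_eval_chainFinLaw hinv hf i).integrable one_le_two]
    simp only [heval, Finset.sum_const, Finset.card_univ, Fintype.card_fin, nsmul_eq_mul]
    field_simp
  have hlaw : HasLaw (fun (ω : ℕ → Z) (i : Fin (n + 1)) => ω (i : ℕ)) (chainFinLaw π K n) P :=
    ⟨(measurable_pi_lambda _ fun i => measurable_pi_apply _).aemeasurable, hP n⟩
  calc _ = ∫ ω, (S (fun i : Fin (n + 1) => ω (i : ℕ)) - ∫ z, f z ∂π) ^ 2 ∂P := by
        simp only [S, Finset.sum_range]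
    _ = Var[S; chainFinLaw π K n] := by
        rw [variance_eq_integral hS.1.aemeasurable, hmean]
        exact hlaw.integral_comp ((hS.sub (memLp_const _)).1.pow 2)
    _ ≤ (1 / ((n + 1 : ℕ) : ℝ)) ^ 2 * ((n + 1) * ((1 + r) / (1 - r) * Var[f; π])) := by
        rw [variance_const_mul]
        gcongr
        exact variance_sum_chainFinLaw_le hr0 hr1 hK hinv hf
    _ = (1 + r) / (1 - r) * Var[f; π] / (n + 1 : ℕ) := by
        push_cast
        field_simp

end Chain

section Tilt

variable {Z : Type*} [MeasurableSpace Z] {Q : Measure Z} [IsProbabilityMeasure Q] {G : Z → ℝ}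
  {Cl Cu : ℝ}

lemma le_integral_of_mem_Icc (hG : Measurable G) (hmem : ∀ z, G z ∈ Set.Icc Cl Cu) :
    Cl ≤ ∫ z, G z ∂Q := by
  simpa using integral_mono (μ := Q) (integrable_const Cl)
    (.of_mem_Icc Cl Cu hG.aemeasurable (.of_forall hmem)) fun z => (hmem z).1

lemma isProbabilityMeasure_withDensity_div_integral (hCl : 0 < Cl) (hG : Measurable G)
    (hmem : ∀ z, G z ∈ Set.Icc Cl Cu) :
    IsProbabilityMeasure (Q.withDensity fun z => ENNReal.ofReal (G z / ∫ z, G z ∂Q)) := by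
  have hpos : 0 < ∫ z, G z ∂Q := hCl.trans_le (le_integral_of_mem_Icc hG hmem)
  refine ⟨?_⟩
  rw [withDensity_apply _ .univ, Measure.restrict_univ, ← ofReal_integral_eq_lintegral_ofReal
    ((Integrable.of_mem_Icc Cl Cu hG.aemeasurable (.of_forall hmem)).div_const _)
    (.of_forall fun z => div_nonneg (hCl.le.trans (hmem z).1) hpos.le), integral_div,
    div_self hpos.ne', ENNReal.ofReal_one]

lemma withDensity_div_integral_le_smul (hCl : 0 < Cl) (hG : Measurable G)
    (hmem : ∀ z, G z ∈ Set.Icc Cl Cu) :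
    Q.withDensity (fun z => ENNReal.ofReal (G z / ∫ z, G z ∂Q)) ≤
      ENNReal.ofReal (Cu / Cl) • Q := by
  rw [← withDensity_const]
  refine withDensity_mono (.of_forall fun z => ENNReal.ofReal_le_ofReal ?_)
  exact div_le_div₀ (hCl.le.trans ((hmem z).1.trans (hmem z).2)) (hmem z).2 hCl
    (le_integral_of_mem_Icc hG hmem)

end Tilt

section MaxWeight

variable {ι : Type*} [Fintype ι] [Nonempty ι] {X : ι → Type*} {g φ : ∀ s, X s → ℝ}
  {Cl Cu M : ℝ}

/-- The unnormalised density `G(z) = max_s g_s(z_s)` of the tilted measure on `∏ s, X s`. -/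
noncomputable def maxWeight (g : ∀ s, X s → ℝ) (z : ∀ s, X s) : ℝ :=
  Finset.univ.sup' Finset.univ_nonempty fun s => g s (z s)

lemma le_maxWeight (s : ι) (z : ∀ s, X s) : g s (z s) ≤ maxWeight g z :=
  Finset.le_sup' (fun s => g s (z s)) (Finset.mem_univ s)

lemma maxWeight_mem_Icc (hg : ∀ s x, g s x ∈ Set.Icc Cl Cu) (z : ∀ s, X s) :
    maxWeight g z ∈ Set.Icc Cl Cu :=
  ⟨(hg _ _).1.trans (le_maxWeight (Classical.arbitrary ι) z),
    Finset.sup'_le _ _ fun s _ => (hg s (z s)).2⟩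

lemma abs_mul_div_maxWeight_le (hCl : 0 < Cl) (hg : ∀ s x, Cl ≤ g s x)
    (hφ : ∀ s x, |φ s x| ≤ M) (s : ι) (z : ∀ s, X s) :
    |φ s (z s) * (g s (z s) / maxWeight g z)| ≤ M := by
  have hg_pos : 0 < g s (z s) := hCl.trans_le (hg s _)
  have hratio : g s (z s) / maxWeight g z ≤ 1 :=
    div_le_one_of_le₀ (le_maxWeight s z) (hg_pos.le.trans (le_maxWeight s z))
  rw [abs_mul, abs_of_nonneg (div_nonneg hg_pos.le (hg_pos.le.trans (le_maxWeight s z)))]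
  exact (mul_le_of_le_one_right (abs_nonneg _) hratio).trans (hφ s _)

variable [∀ s, MeasurableSpace (X s)]

lemma measurable_maxWeight (hg : ∀ s, Measurable (g s)) : Measurable (maxWeight g) := by
  have hsup : maxWeight g =
      Finset.univ.sup' Finset.univ_nonempty fun s (z : ∀ s, X s) => g s (z s) := by
    ext z
    simp only [maxWeight, Finset.sup'_apply]
  rw [hsup]
  exact Finset.measurable_sup' _ fun s _ => (hg s).comp (measurable_pi_apply s)

lemma memLp_sum_mul_div_maxWeight {Q : Measure (∀ s, X s)} [IsFiniteMeasure Q] {p : ℝ≥0∞}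
    (hCl : 0 < Cl) (hg : ∀ s, Measurable (g s)) (hg_le : ∀ s x, Cl ≤ g s x)
    (hφ : ∀ s, Measurable (φ s)) (hφ_le : ∀ s x, |φ s x| ≤ M) (a b : ι → ℝ) :
    MemLp (fun z => ∑ s, a s * (φ s (z s) * (g s (z s) / maxWeight g z)) / b s) p Q := by
  have hterm (s : ι) : MemLp (fun z => φ s (z s) * (g s (z s) / maxWeight g z)) p Q := by
    refine .of_bound ?_ M (.of_forall (abs_mul_div_maxWeight_le hCl hg_le hφ_le s))
    have := measurable_maxWeight hg
    have := hφ s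
    have := hg s
    exact Measurable.aestronglyMeasurable (by fun_prop)
  exact memLp_finsetSum _ fun s _ => by
    simpa only [div_eq_mul_inv] using ((hterm s).const_mul (a s)).mul_const (b s)⁻¹

end MaxWeight

theorem mimcmc_variance_main_general {Z : Type u} [MeasurableSpace Z] {Cl Cu ξ : ℝ}
    (hCl : 0 < Cl) (hξ : 0 < ξ) {Q ν : Measure Z} [IsProbabilityMeasure Q]
    [IsProbabilityMeasure ν] {G : Z → ℝ} (hG : Measurable G) (hmem : ∀ z, G z ∈ Set.Icc Cl Cu)
    {π : Measure Z} (hπ : π = Q.withDensity fun z => ENNReal.ofReal (G z / ∫ z, G z ∂Q))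
    {K : Kernel Z Z} [IsMarkovKernel K] (hinv : K.Invariant π)
    (hmin : ∀ z A, MeasurableSet A → ENNReal.ofReal ξ * ν A ≤ K z A)
    {ψ : Z → ℝ} (hψ : MemLp ψ 2 Q) {V : ℝ} (hV : Var[ψ; Q] ≤ V) {P : Measure (ℕ → Z)}
    (hP : ∀ n : ℕ, P.map (fun ω => fun i : Fin (n + 1) => ω (i : ℕ)) = chainFinLaw π K n)
    {N : ℕ} (hN : 1 ≤ N) :
    ∫ ω, ((1 / (N : ℝ)) * (∑ j ∈ Finset.range N, ψ (ω j)) - ∫ z, ψ z ∂π) ^ 2 ∂P ≤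
      (1 + √(1 - ξ)) / (1 - √(1 - ξ)) * (Cu / Cl) * V / N := by
  have hprob : IsProbabilityMeasure π :=
    hπ ▸ isProbabilityMeasure_withDensity_div_integral hCl hG hmem
  have hle : π ≤ ENNReal.ofReal (Cu / Cl) • Q :=
    hπ ▸ withDensity_div_integral_le_smul hCl hG hmem
  have hcontr : IsL2Contraction K π √(1 - ξ) :=
    isL2Contraction_of_minorization hinv hξ fun z => Measure.le_iff.2 (hmin z)
  have hr : √(1 - ξ) < 1 := (Real.sqrt_lt' one_pos).2 (by linarith)
  have hratio : 0 ≤ (1 + √(1 - ξ)) / (1 - √(1 - ξ)) :=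
    div_nonneg (by positivity) (sub_nonneg.2 hr.le)
  obtain ⟨z⟩ := Q.nonempty_of_neZero
  have hCu : 0 ≤ Cu := hCl.le.trans ((hmem z).1.trans (hmem z).2)
  have hvar : Var[ψ; π] ≤ Cu / Cl * V :=
    (variance_le_mul_variance_of_le_smul (by positivity) hle hψ).trans (by gcongr)
  calc _ ≤ (1 + √(1 - ξ)) / (1 - √(1 - ξ)) * Var[ψ; π] / N :=
        integral_sq_average_sub_integral_le (Real.sqrt_nonneg _) hr hcontr hinv
          (hψ.of_measure_le_smul ENNReal.ofReal_ne_top hle) hP hN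
    _ ≤ (1 + √(1 - ξ)) / (1 - √(1 - ξ)) * (Cu / Cl) * V / N := by
        rw [mul_assoc]
        exact div_le_div_of_nonneg_right (mul_le_mul_of_nonneg_left hvar hratio) N.cast_nonneg

/-- Proposition 3.1, main variance result for the MIMCMC simplified
estimator: for the normalized signed multi-increment `ψ` built from the `2^d` corner
functions, under the boundedness assumptions, (A2′) and (A3), the ergodic average of `ψ`
along the stationary `Π`-reversible Markov chain satisfies
`E[((1/N)∑ψ(Z_j) − T)²] ≤ C max{C₁², C₂², C₁C₂}/N`, with `C` depending only on
`d, C̲, C̄, M, ξ`. -/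
theorem mimcmc_variance_main {d : ℕ} (hd : 1 ≤ d) (Cl Cu M ξ : ℝ)
    (hCl : 0 < Cl) (hClCu : Cl ≤ Cu) (hM : 0 ≤ M) (hξ : ξ ∈ Set.Ioo (0 : ℝ) 1) :
    ∃ C : ℝ,
      ∀ (X : (Fin d → Fin 2) → Type u) (_ : ∀ s, MeasurableSpace (X s))
        (Q : Measure (∀ s, X s)) (_ : IsProbabilityMeasure Q)
        (g : ∀ s, X s → ℝ), (∀ s, Measurable (g s)) →
        (∀ s x, Cl ≤ g s x ∧ g s x ≤ Cu) →
        ∀ G : (∀ s, X s) → ℝ,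
          (∀ z, G z = Finset.univ.sup' Finset.univ_nonempty fun s => g s (z s)) →
        ∀ ZG : ℝ, ZG = ∫ z, G z ∂Q →
        ∀ PiM : Measure (∀ s, X s),
          PiM = Q.withDensity (fun z => ENNReal.ofReal (G z / ZG)) →
        ∀ H : (Fin d → Fin 2) → (∀ s, X s) → ℝ, (∀ s z, H s z = g s (z s) / G z) →
        ∀ φ : ∀ s, X s → ℝ, (∀ s, Measurable (φ s)) → (∀ s x, |φ s x| ≤ M) →
        ∀ ψ : (∀ s, X s) → ℝ,
          (∀ z, ψ z = ∑ s : Fin d → Fin 2,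
            (-1 : ℝ) ^ (∑ i, (s i : ℕ)) * (φ s (z s) * H s z) / ∫ z', H s z' ∂PiM) →
        ∀ T : ℝ, T = ∫ z, ψ z ∂PiM →
        ∀ C₁ C₂ : ℝ, 0 ≤ C₁ → 0 ≤ C₂ →
        (∀ f : (∀ s, X s) → ℝ, Measurable f → (∀ z, |f z| ≤ 1) →
          |∫ z, f z * ψ z ∂Q| ≤ C₁) →
        variance ψ Q ≤ C₂ ^ 2 →
        ∀ K : Kernel (∀ s, X s) (∀ s, X s), IsMarkovKernel K →
        (∀ A B : Set (∀ s, X s), MeasurableSet A → MeasurableSet B →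
          ∫⁻ z in A, K z B ∂PiM = ∫⁻ z in B, K z A ∂PiM) →
        ∀ ν : Measure (∀ s, X s), IsProbabilityMeasure ν →
        (∀ z A, MeasurableSet A → ENNReal.ofReal ξ * ν A ≤ K z A) →
        ∀ P : Measure (ℕ → ∀ s, X s),
          (∀ n : ℕ, P.map (fun ω => fun i : Fin (n + 1) => ω (i : ℕ)) =
            chainFinLaw PiM K n) →
        ∀ N : ℕ, 1 ≤ N →
        ∫ ω, ((1 / (N : ℝ)) * (∑ j ∈ Finset.range N, ψ (ω j)) - T) ^ 2 ∂P ≤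
          C * max (max (C₁ ^ 2) (C₂ ^ 2)) (C₁ * C₂) / N := by
  refine ⟨(1 + √(1 - ξ)) / (1 - √(1 - ξ)) * (Cu / Cl), ?_⟩
  rintro X _ Q _ g hg hg_mem G hG _ rfl π hπ H hH φ hφ hφ_le ψ hψ _ rfl C₁ C₂ - - - hvar K _ hrev
    ν _ hmin P hP N hN
  obtain rfl : G = maxWeight g := funext hG
  have hψ_memLp : MemLp ψ 2 Q := by
    simp only [funext hψ, hH]
    exact memLp_sum_mul_div_maxWeight hCl hg (fun s x => (hg_mem s x).1) hφ hφ_le _ _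
  exact mimcmc_variance_main_general hCl hξ.1 (measurable_maxWeight hg) (maxWeight_mem_Icc hg_mem)
    hπ (Kernel.IsReversible.invariant fun A B => hrev A B) hmin hψ_memLp
    (hvar.trans ((le_max_right _ _).trans (le_max_left _ _))) hP hN
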